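/- arXiv:2509.07371 — 3 statements merged into one kernel-verified Lean document; each statement's English description precedes it below -/
import Mathlib

section
/- (High-frequency non-resonance) For every k₀ > 0 there exist δ > 0 and C > 0 such that for all j, p, σ ∈ {1, −1} and all k, m ∈ ℝ satisfying |k| ≥ δ, |m| ≥ δ, and (|k − m − k₀| ≤ δ or |k − m + k₀| ≤ δ), one has |j·ω(k) + σ·ω(k − m) − p·ω(m)| ≥ C. -/
noncomputable def qhat (k : ℝ) : ℝ := Real.sqrt ((2 + k ^ 2) / (1 + k ^ 2))

noncomputable def ω (k : ℝ) : ℝ := k * qhat k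

lemma qhat_nonneg (k : ℝ) : 0 ≤ qhat k := Real.sqrt_nonneg _

lemma qhat_sq (k : ℝ) : qhat k ^ 2 = (2 + k ^ 2) / (1 + k ^ 2) :=
  Real.sq_sqrt (by positivity)

lemma qhat_le (k : ℝ) : qhat k ≤ 3 / 2 := by
  refine Real.sqrt_le_iff.2 ⟨by norm_num, ?_⟩
  rw [div_le_iff₀ (by positivity)]
  nlinarith [sq_nonneg k]

lemma qhat_le_qhat {a b : ℝ} (ha : 0 ≤ a) (hab : a ≤ b) : qhat b ≤ qhat a := by
  refine Real.sqrt_le_sqrt ?_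
  rw [div_le_div_iff₀ (by positivity) (by positivity)]
  nlinarith

lemma ω_neg (k : ℝ) : ω (-k) = -ω k := by simp [ω, qhat]

lemma ω_nonneg {k : ℝ} (hk : 0 ≤ k) : 0 ≤ ω k := mul_nonneg hk (qhat_nonneg k)

lemma ω_sq (k : ℝ) : ω k ^ 2 = k ^ 2 + 1 - 1 / (1 + k ^ 2) := by
  have : 1 + k ^ 2 ≠ 0 := by positivity
  rw [ω, mul_pow, qhat_sq]
  field_simp
  ring

lemma ω_le_ω {a b : ℝ} (ha : 0 ≤ a) (hab : a ≤ b) : ω a ≤ ω b := by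
  refine le_of_sq_le_sq ?_ (ω_nonneg (ha.trans hab))
  have h : a ^ 2 ≤ b ^ 2 := by gcongr
  have : 1 / (1 + b ^ 2) ≤ 1 / (1 + a ^ 2) := by gcongr
  rw [ω_sq, ω_sq]
  linarith

/-- A quantitative form of the strict monotonicity of `qhat`. -/
lemma le_qhat_sub_qhat {a δ : ℝ} (hδ : 0 < δ) (ha : δ ≤ a) (ha' : a ≤ 3 * δ) :
    δ ^ 2 / (3 * (1 + 16 * δ ^ 2) ^ 2) ≤ qhat a - qhat (a + δ) := by
  have h0 : 0 ≤ qhat a - qhat (a + δ) :=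
    sub_nonneg.2 (qhat_le_qhat (by linarith) (by linarith))
  have hsq : δ ^ 2 / (1 + 16 * δ ^ 2) ^ 2 ≤ qhat a ^ 2 - qhat (a + δ) ^ 2 := by
    have e : qhat a ^ 2 - qhat (a + δ) ^ 2
        = (2 * a * δ + δ ^ 2) / ((1 + a ^ 2) * (1 + (a + δ) ^ 2)) := by
      have h1 : 1 + a ^ 2 ≠ 0 := by positivity
      have h2 : 1 + (a + δ) ^ 2 ≠ 0 := by positivity
      rw [qhat_sq, qhat_sq]
      field_simp
      ring
    have hpos : 0 < a := by linarith
    rw [e, sq (1 + 16 * δ ^ 2)]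
    gcongr
    · nlinarith
    · nlinarith
    · nlinarith
  have hs : qhat a ^ 2 - qhat (a + δ) ^ 2 ≤ 3 * (qhat a - qhat (a + δ)) := by
    nlinarith [qhat_le a, qhat_le (a + δ)]
  rw [mul_comm, ← div_div]
  linarith

/-- A quantitative form of the strict subadditivity of `ω` on the positive half-line. -/
lemma le_ω_add_ω_sub_ω {a b δ : ℝ} (hδ : 0 < δ) (ha : δ ≤ a) (ha' : a ≤ 3 * δ) (hb : δ ≤ b) :
    δ * (δ ^ 2 / (3 * (1 + 16 * δ ^ 2) ^ 2)) ≤ ω a + ω b - ω (a + b) := by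
  have h := le_qhat_sub_qhat hδ ha ha'
  have h1 : qhat (a + b) ≤ qhat (a + δ) := qhat_le_qhat (by linarith) (by linarith)
  have h2 : qhat (a + b) ≤ qhat b := qhat_le_qhat (by linarith) (by linarith)
  calc δ * (δ ^ 2 / (3 * (1 + 16 * δ ^ 2) ^ 2))
      ≤ a * (qhat a - qhat (a + b)) := by
        gcongr
        · linarith
        · linarith
    _ ≤ a * (qhat a - qhat (a + b)) + b * (qhat b - qhat (a + b)) :=
        le_add_of_nonneg_right (mul_nonneg (by linarith) (by linarith))
    _ = ω a + ω b - ω (a + b) := by simp only [ω]; ring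

lemma le_abs_signed_sum_ω {a b δ s t u : ℝ} (hδ : 0 < δ) (ha : δ ≤ a) (ha' : a ≤ 3 * δ)
    (hb : δ ≤ b) (hs : s = 1 ∨ s = -1) (ht : t = 1 ∨ t = -1) (hu : u = 1 ∨ u = -1) :
    δ * (δ ^ 2 / (3 * (1 + 16 * δ ^ 2) ^ 2)) ≤ |s * ω a + t * ω b + u * ω (a + b)| := by
  have h := le_ω_add_ω_sub_ω hδ ha ha' hb
  have h1 : ω a ≤ ω (a + b) := ω_le_ω (by linarith) (by linarith)
  have h2 : ω b ≤ ω (a + b) := ω_le_ω (by linarith) (by linarith)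
  have h3 : 0 ≤ ω a := ω_nonneg (by linarith)
  have h4 : 0 ≤ ω b := ω_nonneg (by linarith)
  rw [le_abs]
  rcases hs with rfl | rfl <;> rcases ht with rfl | rfl <;> rcases hu with rfl | rfl <;>
    first
    | (left; linarith)
    | (right; linarith)

/-- The case in which the bounded frequency `l` is positive. -/
lemma le_abs_signed_sum_ω_of_pos {k l m δ s t u : ℝ} (hδ : 0 < δ) (hk : δ ≤ |k|) (hm : δ ≤ |m|)
    (hl : δ ≤ l) (hl' : l ≤ 3 * δ) (hklm : k = l + m)
    (hs : s = 1 ∨ s = -1) (ht : t = 1 ∨ t = -1) (hu : u = 1 ∨ u = -1) :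
    δ * (δ ^ 2 / (3 * (1 + 16 * δ ^ 2) ^ 2)) ≤ |s * ω k + t * ω l + u * ω m| := by
  have neg_sign {x : ℝ} (hx : x = 1 ∨ x = -1) : -x = 1 ∨ -x = -1 := by
    rcases hx with rfl | rfl <;> simp
  rcases le_abs.1 hm with hm | hm
  · convert le_abs_signed_sum_ω hδ hl hl' hm ht hu hs using 2
    rw [hklm]
    ring
  rcases le_abs.1 hk with hk | hk
  · convert le_abs_signed_sum_ω hδ hk (by linarith) hm hs (neg_sign hu) ht using 2
    rw [ω_neg, show k + -m = l by linarith]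
    ring
  · convert le_abs_signed_sum_ω hδ hl hl' hk ht (neg_sign hs) (neg_sign hu) using 2
    rw [show l + -k = -m by linarith, ω_neg, ω_neg]
    ring

theorem stmt4 (k₀ : ℝ) (hk₀ : 0 < k₀) :
    ∃ δ > (0 : ℝ), ∃ C > (0 : ℝ), ∀ j p σ : ℝ,
      (j = 1 ∨ j = -1) → (p = 1 ∨ p = -1) → (σ = 1 ∨ σ = -1) →
      ∀ k m : ℝ, δ ≤ |k| → δ ≤ |m| →
        (|k - m - k₀| ≤ δ ∨ |k - m + k₀| ≤ δ) →
        C ≤ |j * ω k + σ * ω (k - m) - p * ω m| := by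
  obtain ⟨δ, rfl⟩ : ∃ δ, k₀ = 2 * δ := ⟨k₀ / 2, by ring⟩
  have hδ : 0 < δ := by linarith
  refine ⟨δ, hδ, δ * (δ ^ 2 / (3 * (1 + 16 * δ ^ 2) ^ 2)), by positivity, ?_⟩
  intro j p σ hj hp hσ k m hk hm hkm
  have hp' : -p = 1 ∨ -p = -1 := by rcases hp with rfl | rfl <;> simp
  rcases hkm with h | h <;> obtain ⟨h1, h2⟩ := abs_le.1 h
  · convert le_abs_signed_sum_ω_of_pos hδ hk hm (l := k - m) (by linarith) (by linarith)
      (by ring) hj hσ hp' using 2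
    ring
  · rw [← abs_neg]
    convert le_abs_signed_sum_ω_of_pos (k := -k) (m := -m) (l := -(k - m)) hδ
      (by rwa [abs_neg]) (by rwa [abs_neg]) (by linarith) (by linarith) (by ring) hj hσ hp' using 2
    rw [ω_neg, ω_neg, ω_neg]
    ring
end

section
/- (Asymptotics of the opposite-mode quadratic kernel) For every κ ∈ ℝ and all j, σ ∈ {1, −1} there exists C > 0 such that for every k ∈ ℝ one has |ζ^σ_{j,−j}(k, κ, k−κ) + 2j| ≤ C/(1+k²). In particular ζ^σ_{j,−j}(k, κ, k−κ) → −2j as |k| → ∞, with error of order O(|k|⁻²). -/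
/-- The quadratic interaction kernel ζ^σ_{j,p}(k, κ, m) of the diagonalized
ion Euler–Poisson system. -/
noncomputable def ζ (σ j p : ℝ) (k κ m : ℝ) : ℝ :=
  p * qhat m + σ * qhat κ + σ * (j * p / qhat k) * qhat κ * qhat m
    - j / qhat k - j / (qhat k * (1 + k ^ 2) * (1 + κ ^ 2) * (1 + m ^ 2))

theorem one_le_qhat (k : ℝ) : 1 ≤ qhat k := by
  rw [qhat, Real.one_le_sqrt, one_le_div (by positivity)]
  linarith

theorem qhat_le_one_add (k : ℝ) : qhat k ≤ 1 + 1 / (1 + k ^ 2) := by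
  have hu : 0 < 1 / (1 + k ^ 2) := by positivity
  have h : (2 + k ^ 2) / (1 + k ^ 2) = 1 + 1 / (1 + k ^ 2) := by
    field_simp
    ring
  rw [qhat, h, Real.sqrt_le_left (by positivity)]
  nlinarith

theorem qhat_le_two (k : ℝ) : qhat k ≤ 2 := by
  have h : 1 / (1 + k ^ 2) ≤ 1 := by
    rw [div_le_one (by positivity)]
    nlinarith [sq_nonneg k]
  linarith [qhat_le_one_add k]

/-- Peetre's inequality for the weight `1 + k ^ 2`. -/
theorem one_div_one_add_sub_sq_le (k κ : ℝ) :
    1 / (1 + (k - κ) ^ 2) ≤ 2 * (1 + κ ^ 2) * (1 / (1 + k ^ 2)) := by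
  rw [mul_one_div, div_le_div_iff₀ (by positivity) (by positivity)]
  nlinarith [sq_nonneg (k - 2 * κ), sq_nonneg (κ * (k - κ))]

theorem stmt12 (κ : ℝ) (j σ : ℝ) (hj : j = 1 ∨ j = -1) (hσ : σ = 1 ∨ σ = -1) :
    ∃ C > (0 : ℝ), ∀ k : ℝ,
      |ζ σ j (-j) k κ (k - κ) + 2 * j| ≤ C / (1 + k ^ 2) := by
  refine ⟨4 + 6 * (1 + κ ^ 2), by positivity, fun k => ?_⟩
  have hv := one_div_one_add_sub_sq_le k κ
  have ha := one_le_qhat (k - κ)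
  have ha' := qhat_le_one_add (k - κ)
  have hb := one_le_qhat k
  have hb' := qhat_le_one_add k
  have hq := one_le_qhat κ
  have hq' := qhat_le_two κ
  have hE : 1 / (qhat k * (1 + k ^ 2) * (1 + κ ^ 2) * (1 + (k - κ) ^ 2)) ≤ 1 / (1 + k ^ 2) := by
    apply one_div_le_one_div_of_le (by positivity)
    calc 1 + k ^ 2 = 1 * (1 + k ^ 2) * 1 * 1 := by ring
      _ ≤ qhat k * (1 + k ^ 2) * (1 + κ ^ 2) * (1 + (k - κ) ^ 2) := by
        gcongr <;> nlinarith [sq_nonneg κ, sq_nonneg (k - κ)]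
  have hE0 : 0 ≤ 1 / (qhat k * (1 + k ^ 2) * (1 + κ ^ 2) * (1 + (k - κ) ^ 2)) := by positivity
  have hu0 : 0 < 1 / (1 + k ^ 2) := by positivity
  have hv0 : 0 < 1 / (1 + (k - κ) ^ 2) := by positivity
  have hjj : j * -j = -1 := by rcases hj with rfl | rfl <;> norm_num
  have key : ζ σ j (-j) k κ (k - κ) + 2 * j =
      j * ((1 - qhat (k - κ)) + (1 - 1 / qhat k)
        - 1 / (qhat k * (1 + k ^ 2) * (1 + κ ^ 2) * (1 + (k - κ) ^ 2)))
      + σ * (qhat κ * ((qhat k - qhat (k - κ)) / qhat k)) := by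
    rw [ζ, hjj]
    field_simp
    ring
  rw [key, div_eq_mul_one_div (4 + 6 * (1 + κ ^ 2))]
  generalize 1 / (qhat k * (1 + k ^ 2) * (1 + κ ^ 2) * (1 + (k - κ) ^ 2)) = e at *
  generalize 1 / (1 + k ^ 2) = u at *
  generalize 1 / (1 + (k - κ) ^ 2) = v at *
  have h1 : |(1 - qhat (k - κ)) + (1 - 1 / qhat k) - e| ≤ v + u + u := by
    have hi : 1 / qhat k ≤ 1 := by rw [div_le_one (by positivity)]; exact hb
    have hi' : 1 - u ≤ 1 / qhat k := by
      rw [le_div_iff₀ (by positivity)]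
      nlinarith
    rw [abs_le]
    constructor <;> linarith
  have h2 : |qhat κ * ((qhat k - qhat (k - κ)) / qhat k)| ≤ 2 * (u + v) := by
    rw [abs_mul, abs_div, abs_of_pos (by positivity : 0 < qhat κ),
      abs_of_pos (by positivity : 0 < qhat k)]
    have hd : |qhat k - qhat (k - κ)| ≤ u + v := by
      rw [abs_le]
      constructor <;> linarith
    gcongr
    exact (div_le_self (abs_nonneg _) hb).trans hd
  have hj1 : |j| = 1 := by rcases hj with rfl | rfl <;> norm_num
  have hσ1 : |σ| = 1 := by rcases hσ with rfl | rfl <;> norm_num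
  refine (abs_add_le _ _).trans ?_
  rw [abs_mul j, abs_mul σ, hj1, hσ1]
  linarith
end

section
/- Let c_g > 0, let F⁻ : ℝ → ℝ be continuously differentiable, and let F⁺ : ℝ → ℝ be continuous. Define h̃(T, X) = (1/(2c_g))·F⁻(X − c_g T)·∫_{X − c_g T}^{X + c_g T} (F⁺(τ))² dτ. Then h̃(0, X) = 0 for every X, and ∂_T h̃(T, X) + c_g·∂_X h̃(T, X) = F⁻(X − c_g T)·(F⁺(X + c_g T))² for all (T, X); moreover, if in addition (F⁺)² and (F⁻)² are integrable on ℝ, then for every T ∈ ℝ one has ∫_ℝ h̃(T, X)² dX ≤ (1/(2c_g))²·(∫_ℝ (F⁻(x))² dx)·(∫_ℝ (F⁺(x))² dx)². -/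
open MeasureTheory

/-- Explicit solution of the transport problem
`[∂_T + c_g ∂_X] h̃ = F⁻(X − c_g T)·(F⁺(X + c_g T))²`, `h̃|_{T=0} = 0`. -/
noncomputable def htilde (cg : ℝ) (Fp Fm : ℝ → ℝ) (T X : ℝ) : ℝ :=
  (1 / (2 * cg)) * Fm (X - cg * T) * ∫ τ in (X - cg * T)..(X + cg * T), (Fp τ) ^ 2

theorem hasDerivAt_integral_sq_comp {f a b : ℝ → ℝ} (hf : Continuous f) {a' b' s : ℝ}
    (ha : HasDerivAt a a' s) (hb : HasDerivAt b b' s) :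
    HasDerivAt (fun s => ∫ τ in (a s)..(b s), f τ ^ 2)
      (f (b s) ^ 2 * b' - f (a s) ^ 2 * a') s := by
  have hc : Continuous fun τ => f τ ^ 2 := hf.pow 2
  have hprim (y : ℝ) : HasDerivAt (fun u => ∫ τ in (0 : ℝ)..u, f τ ^ 2) (f y ^ 2) y :=
    hc.integral_hasStrictDerivAt 0 y |>.hasDerivAt
  refine (((hprim (b s)).comp s hb).sub ((hprim (a s)).comp s ha)).congr_of_eventuallyEq
    (.of_forall fun t => ?_)
  exact (intervalIntegral.integral_interval_sub_left
    (hc.intervalIntegrable _ _) (hc.intervalIntegrable _ _)).symm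

theorem abs_intervalIntegral_le_integral {f : ℝ → ℝ} (hf : Integrable f) (h0 : ∀ x, 0 ≤ f x)
    (a b : ℝ) : |∫ x in a..b, f x| ≤ ∫ x, f x := by
  rw [intervalIntegral.abs_integral_eq_abs_integral_uIoc,
    abs_of_nonneg (integral_nonneg h0)]
  exact setIntegral_le_integral hf (.of_forall h0)

/-- The derivative of `htilde` along a curve `s ↦ (t s, x s)` in the `(T, X)`-plane. -/
theorem hasDerivAt_htilde_comp (cg : ℝ) {Fp Fm t x : ℝ → ℝ} {t' x' s : ℝ}
    (hFm : Differentiable ℝ Fm) (hFp : Continuous Fp)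
    (ht : HasDerivAt t t' s) (hx : HasDerivAt x x' s) :
    HasDerivAt (fun s => htilde cg Fp Fm (t s) (x s))
      (1 / (2 * cg) * (deriv Fm (x s - cg * t s) * (x' - cg * t')) *
          (∫ τ in (x s - cg * t s)..(x s + cg * t s), Fp τ ^ 2) +
        1 / (2 * cg) * Fm (x s - cg * t s) *
          (Fp (x s + cg * t s) ^ 2 * (x' + cg * t') -
            Fp (x s - cg * t s) ^ 2 * (x' - cg * t'))) s := by
  have ha := hx.sub (ht.const_mul cg)
  have hb := hx.add (ht.const_mul cg)
  exact (((hFm _).hasDerivAt.comp s ha).const_mul (1 / (2 * cg))).mul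
    (hasDerivAt_integral_sq_comp hFp ha hb)

theorem stmt15 (cg : ℝ) (hcg : 0 < cg) (Fp Fm : ℝ → ℝ)
    (hFm : ContDiff ℝ 1 Fm) (hFp : Continuous Fp) :
    (∀ X : ℝ, htilde cg Fp Fm 0 X = 0) ∧
    (∀ T X : ℝ,
      deriv (fun t => htilde cg Fp Fm t X) T
        + cg * deriv (fun x => htilde cg Fp Fm T x) X
      = Fm (X - cg * T) * (Fp (X + cg * T)) ^ 2) ∧
    ((Integrable fun x => (Fp x) ^ 2) → (Integrable fun x => (Fm x) ^ 2) →
      ∀ T : ℝ, ∫ X, (htilde cg Fp Fm T X) ^ 2 ≤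
        (1 / (2 * cg)) ^ 2 * (∫ x, (Fm x) ^ 2) * (∫ x, (Fp x) ^ 2) ^ 2) := by
  refine ⟨fun X => by simp [htilde], fun T X => ?_, fun hp hm T => ?_⟩
  · have hd := hFm.differentiable one_ne_zero
    rw [(hasDerivAt_htilde_comp cg hd hFp (hasDerivAt_id' T) (hasDerivAt_const T X)).deriv,
      (hasDerivAt_htilde_comp cg hd hFp (hasDerivAt_const X T) (hasDerivAt_id' X)).deriv]
    field_simp
    ring
  · have hshift : ∫ X, Fm (X - cg * T) ^ 2 = ∫ x, Fm x ^ 2 :=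
      integral_sub_right_eq_self (fun x => Fm x ^ 2) (cg * T)
    rw [← hshift, ← integral_const_mul, ← integral_mul_const]
    refine integral_mono_of_nonneg (.of_forall fun X => sq_nonneg _)
      (((hm.comp_sub_right (cg * T)).const_mul _).mul_const _) (.of_forall fun X => ?_)
    have hle : (∫ τ in (X - cg * T)..(X + cg * T), Fp τ ^ 2) ^ 2 ≤ (∫ x, Fp x ^ 2) ^ 2 :=
      sq_le_sq' (abs_le.1 (abs_intervalIntegral_le_integral hp (fun x => sq_nonneg _) _ _)).1
        (abs_le.1 (abs_intervalIntegral_le_integral hp (fun x => sq_nonneg _) _ _)).2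
    simp only [htilde, mul_pow]
    gcongr
end
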